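/- For every fixed s ∈ Int(S_d) and j ∈ {1,…,d}, there exist constants C > 0 and b₀ > 0 such that for all b ∈ (0, b₀), ∫_{S_d} |x_j − s_j|⁶ κ_{s,b}(x) dx ≤ C b³. Moreover, if λ_j ∈ (0,∞) and s = s(b) ∈ Int(S_d) is a sequence with s_j/b → λ_j as b → 0, then there exist constants C' > 0 and b₁ > 0 such that ∫_{S_d} |x_j − s(b)_j|⁶ κ_{s(b),b}(x) dx ≤ C' b⁶ for all b ∈ (0, b₁). -/

import Mathlib

open MeasureTheory ProbabilityTheory Real Filter Finset Matrix

noncomputable section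

/-- The unit simplex `S_d = {x ∈ [0,1]^d : x_1 + … + x_d ≤ 1}`. -/
def Sd (d : ℕ) : Set (Fin d → ℝ) :=
  {x | (∀ i, 0 ≤ x i ∧ x i ≤ 1) ∧ ∑ i, x i ≤ 1}

/-- The interior of the unit simplex. -/
def SdInt (d : ℕ) : Set (Fin d → ℝ) :=
  {x | (∀ i, 0 < x i) ∧ ∑ i, x i < 1}

/-- The Dirichlet(u, v) density on the simplex. -/
def Kdir {d : ℕ} (u : Fin d → ℝ) (v : ℝ) (x : Fin d → ℝ) : ℝ :=
  (Gamma ((∑ i, u i) + v) / (Gamma v * ∏ i, Gamma (u i))) *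
    (1 - ∑ i, x i) ^ (v - 1) * ∏ i, (x i) ^ (u i - 1)

/-- The locally adaptive Dirichlet kernel `κ_{s,b}`. -/
def kappa {d : ℕ} (s : Fin d → ℝ) (b : ℝ) : (Fin d → ℝ) → ℝ :=
  Kdir (fun i => s i / b + 1) ((1 - ∑ i, s i) / b + 1)

/-- `A_b(s) = ∫_{S_d} κ_{s,b}(x)² dx`. -/
def Adir {d : ℕ} (b : ℝ) (s : Fin d → ℝ) : ℝ :=
  ∫ x in Sd d, (kappa s b x) ^ 2

/-- Second partial derivative `∂² m / ∂ s_k ∂ s_ℓ` at `s`. -/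
def d2 {d : ℕ} (m : (Fin d → ℝ) → ℝ) (k l : Fin d) (s : Fin d → ℝ) : ℝ :=
  fderiv ℝ (fun x => fderiv ℝ m x (Pi.single l 1)) s (Pi.single k 1)

/-- The function `h_J(s)` from the paper. -/
def hJfun {d : ℕ} (m : (Fin d → ℝ) → ℝ) (J : Finset (Fin d)) (lam : Fin d → ℝ)
    (s : Fin d → ℝ) : ℝ :=
  if J = Finset.univ then
    ∑ k, ∑ l, (1 / 2 : ℝ) * ((lam k + 1) * (if k = l then 1 else 0) + 1) * d2 m k l s
  else
    ∑ k ∈ Jᶜ, ∑ l ∈ Jᶜ, (1 / 2 : ℝ) * ((if k = l then s k else 0) - s k * s l) * d2 m k l s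

/-- The function `ψ_J(s)` from the paper. -/
def psiJ {d : ℕ} (J : Finset (Fin d)) (s : Fin d → ℝ) : ℝ :=
  ((4 * π) ^ ((d : ℝ) - J.card) * (1 - ∑ i, s i) * ∏ i ∈ Jᶜ, s i) ^ (-(1 : ℝ) / 2)

/-- The product `∏_{i ∈ J} Γ(2λ_i+1) / (2^{2λ_i+1} Γ(λ_i+1)²)`. -/
def gamProd {d : ℕ} (J : Finset (Fin d)) (lam : Fin d → ℝ) : ℝ :=
  ∏ i ∈ J, Gamma (2 * lam i + 1) / ((2 : ℝ) ^ (2 * lam i + 1) * Gamma (lam i + 1) ^ 2)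

/-- The local linear smoother with Dirichlet kernel. -/
def mLL {d n : ℕ} (b : ℝ) (X : Fin n → Fin d → ℝ) (Y : Fin n → ℝ) (s : Fin d → ℝ) : ℝ :=
  let 𝒳 : Matrix (Fin n) (Fin (d + 1)) ℝ :=
    Matrix.of fun i => Fin.cases 1 (fun k => X i k - s k)
  let W : Matrix (Fin n) (Fin n) ℝ := Matrix.diagonal fun i => kappa s b (X i)
  ((𝒳ᵀ * W * 𝒳)⁻¹ *ᵥ (𝒳ᵀ *ᵥ (W *ᵥ Y))) 0

/-- The Nadaraya–Watson estimator with Dirichlet kernel. -/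
def mNW {d n : ℕ} (b : ℝ) (X : Fin n → Fin d → ℝ) (Y : Fin n → ℝ) (s : Fin d → ℝ) : ℝ :=
  (∑ i, Y i * kappa s b (X i)) / ∑ j, kappa s b (X j)

/-- Central second moment `C_b(s; k, ℓ)` of the Dirichlet kernel. -/
def CbM {d : ℕ} (b : ℝ) (s : Fin d → ℝ) (k l : Fin d) : ℝ :=
  ∫ x in Sd d, (x k - s k) * (x l - s l) * kappa s b x

end

/-!
Multiplying the Dirichlet density by `x_j` raises its `j`-th parameter by one, up to a constant.
This gives a recursion for the moments of `X_j`, hence, with `N = u_1 + ⋯ + u_d + v`, Stein's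
identity `E[(N X_j - u_j) p(X_j)] = E[X_j (1 - X_j) p'(X_j)]` for every polynomial `p`.

For `κ_{s,b}` one has `N ≥ 1/b` and `|u_j - N s_j| ≤ d`, so `p(t) = (t - s_j)^(2m+1)` yields
`N E(X_j - s_j)^(2m+2) ≤ ((2m+1)/4 + d) E(X_j - s_j)^(2m)`, and the `2m`-th central moment is
`O(b^m)`. When `s_j = O(b)`, the parameter `u_j` stays bounded and the moment recursion already
gives `E X_j^k = O(b^k)`.
-/

/-- The simplex of size `T`; the slice of `scaledSimplex (d + 1) T` at first coordinate `t` is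
`scaledSimplex d (T - t)`. -/
def scaledSimplex (d : ℕ) (T : ℝ) : Set (Fin d → ℝ) :=
  {x | (∀ i, 0 ≤ x i) ∧ ∑ i, x i ≤ T}

/-- The unnormalised Dirichlet density on the simplex of size `T`. -/
noncomputable def dirichletWeight {d : ℕ} (u : Fin d → ℝ) (v T : ℝ) (x : Fin d → ℝ) : ℝ :=
  (T - ∑ i, x i) ^ (v - 1) * ∏ i, x i ^ (u i - 1)

/-- The multivariate beta function `Γ(u_1) ⋯ Γ(u_d) Γ(v) / Γ(u_1 + ⋯ + u_d + v)`, the normalising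
constant of the Dirichlet distribution. -/
noncomputable def multivariateBeta {d : ℕ} (u : Fin d → ℝ) (v : ℝ) : ℝ :=
  (∏ i, Gamma (u i)) * Gamma v / Gamma ((∑ i, u i) + v)

section ScaledSimplex

variable {d : ℕ} {T : ℝ}

lemma isClosed_scaledSimplex : IsClosed (scaledSimplex d T) :=
  (isClosed_le continuous_const continuous_id).inter
    (isClosed_le (f := fun x : Fin d → ℝ => ∑ i, x i) (by fun_prop) continuous_const)

lemma cons_mem_scaledSimplex {t : ℝ} {y : Fin d → ℝ} :
    (Fin.cons t y : Fin (d + 1) → ℝ) ∈ scaledSimplex (d + 1) T ↔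
      t ∈ Set.Icc 0 T ∧ y ∈ scaledSimplex d (T - t) := by
  simp only [scaledSimplex, Set.mem_ofPred_eq, Fin.forall_fin_succ, Fin.cons_zero, Fin.cons_succ,
    Fin.sum_univ_succ, Set.mem_Icc]
  constructor
  · rintro ⟨⟨ht, hy⟩, hsum⟩
    have := Finset.sum_nonneg fun i (_ : i ∈ Finset.univ) => hy i
    exact ⟨⟨ht, by linarith⟩, hy, by linarith⟩
  · rintro ⟨⟨ht, -⟩, hy, hsum⟩
    exact ⟨⟨ht, hy⟩, by linarith⟩

lemma Sd_eq_scaledSimplex (d : ℕ) : Sd d = scaledSimplex d 1 := by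
  ext x
  refine ⟨fun hx => ⟨fun i => (hx.1 i).1, hx.2⟩, fun hx => ⟨fun i => ⟨hx.1 i, ?_⟩, hx.2⟩⟩
  exact (Finset.single_le_sum (fun i _ => hx.1 i) (Finset.mem_univ i)).trans hx.2

lemma measurableSet_Sd (d : ℕ) : MeasurableSet (Sd d) :=
  Sd_eq_scaledSimplex d ▸ isClosed_scaledSimplex.measurableSet

lemma isCompact_Sd (d : ℕ) : IsCompact (Sd d) := by
  refine isCompact_Icc.of_isClosed_subset (Sd_eq_scaledSimplex d ▸ isClosed_scaledSimplex)
    (fun x hx => ?_ : Sd d ⊆ Set.Icc (0 : Fin d → ℝ) 1)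
  exact ⟨fun i => (hx.1 i).1, fun i => (hx.1 i).2⟩

lemma lintegral_scaledSimplex_succ {f : (Fin (d + 1) → ℝ) → ENNReal} (hf : Measurable f) :
    ∫⁻ x in scaledSimplex (d + 1) T, f x =
      ∫⁻ t in Set.Ioo 0 T, ∫⁻ y in scaledSimplex d (T - t), f (Fin.cons t y) := by
  have hmp := (volume_preserving_piFinSuccAbove (fun _ : Fin (d + 1) => ℝ) 0).symm
  have hmeas : Measurable ((scaledSimplex (d + 1) T).indicator f) :=
    hf.indicator isClosed_scaledSimplex.measurableSet
  rw [← lintegral_indicator isClosed_scaledSimplex.measurableSet,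
    ← hmp.lintegral_comp_emb (MeasurableEquiv.measurableEmbedding _), Measure.volume_eq_prod,
    lintegral_prod _ (hmeas.fun_comp hmp.measurable).aemeasurable,
    setLIntegral_congr Ioo_ae_eq_Icc, ← lintegral_indicator measurableSet_Icc]
  refine lintegral_congr fun t => ?_
  have hslice (y : Fin d → ℝ) : (scaledSimplex (d + 1) T).indicator f (Fin.cons t y) =
      (Set.Icc 0 T).indicator
        (fun t => (scaledSimplex d (T - t)).indicator (fun y => f (Fin.cons t y)) y) t := by
    classical
    simp only [Set.indicator_apply, cons_mem_scaledSimplex, ite_and]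
  simp only [MeasurableEquiv.piFinSuccAbove_symm_apply, Fin.insertNthEquiv_zero,
    Fin.consEquiv, Equiv.coe_fn_mk, hslice]
  by_cases ht : t ∈ Set.Icc 0 T
  · simp only [Set.indicator_of_mem ht, lintegral_indicator isClosed_scaledSimplex.measurableSet]
  · simp only [Set.indicator_of_notMem ht, lintegral_zero]

end ScaledSimplex

section DirichletIntegral

lemma lintegral_rpow_mul_one_sub_rpow {p q : ℝ} (hp : 0 < p) (hq : 0 < q) :
    ∫⁻ t in Set.Ioo (0 : ℝ) 1, ENNReal.ofReal (t ^ (p - 1) * (1 - t) ^ (q - 1)) =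
      ENNReal.ofReal (beta p q) := by
  have hB := beta_pos hp hq
  have hone : ENNReal.ofReal (1 / beta p q) *
      ∫⁻ t in Set.Ioo (0 : ℝ) 1, ENNReal.ofReal (t ^ (p - 1) * (1 - t) ^ (q - 1)) = 1 := by
    rw [← lintegral_betaPDF_eq_one hp hq, lintegral_betaPDF,
      ← lintegral_const_mul' _ _ ENNReal.ofReal_ne_top]
    simp only [← ENNReal.ofReal_mul (one_div_pos.2 hB).le, mul_assoc]
  rw [one_div, ENNReal.ofReal_inv_of_pos hB] at hone
  simpa using ENNReal.eq_inv_of_mul_eq_one_left ((mul_comm _ _).trans hone)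

lemma lintegral_rpow_mul_sub_rpow {p q T : ℝ} (hp : 0 < p) (hq : 0 < q) (hT : 0 < T) :
    ∫⁻ t in Set.Ioo 0 T, ENNReal.ofReal (t ^ (p - 1) * (T - t) ^ (q - 1)) =
      ENNReal.ofReal (T ^ (p + q - 1) * beta p q) := by
  have himage : Set.Ioo 0 T = (T * ·) '' Set.Ioo 0 1 := by
    rw [Set.image_mul_left_Ioo hT, mul_zero, mul_one]
  have hscale : ∀ t ∈ Set.Ioo (0 : ℝ) 1,
      |T| * ((T * t) ^ (p - 1) * (T - T * t) ^ (q - 1)) =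
        T ^ (p + q - 1) * (t ^ (p - 1) * (1 - t) ^ (q - 1)) := fun t ht => by
    have hpow : T ^ (p + q - 1) = T * (T ^ (p - 1) * T ^ (q - 1)) := by
      rw [show p + q - 1 = 1 + ((p - 1) + (q - 1)) by ring, rpow_add hT, rpow_one, rpow_add hT]
    rw [abs_of_pos hT, ← mul_one_sub, mul_rpow hT.le ht.1.le, mul_rpow hT.le (by linarith [ht.2]),
      hpow]
    ring
  rw [himage, lintegral_image_eq_lintegral_abs_deriv_mul measurableSet_Ioo
    (fun t _ => ((hasDerivAt_id' t).const_mul T).hasDerivWithinAt)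
    (mul_right_injective₀ hT.ne').injOn, ENNReal.ofReal_mul (by positivity),
    ← lintegral_rpow_mul_one_sub_rpow hp hq, ← lintegral_const_mul' _ _ ENNReal.ofReal_ne_top]
  refine setLIntegral_congr_fun measurableSet_Ioo fun t ht => ?_
  simp only [mul_one]
  rw [← ENNReal.ofReal_mul (abs_nonneg T), ← ENNReal.ofReal_mul (by positivity), hscale t ht]

variable {d : ℕ} {v T : ℝ}

lemma measurable_dirichletWeight (u : Fin d → ℝ) (v T : ℝ) :
    Measurable (dirichletWeight u v T) := by
  unfold dirichletWeight
  fun_prop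

lemma dirichletWeight_cons (u : Fin (d + 1) → ℝ) (t : ℝ) (y : Fin d → ℝ) :
    dirichletWeight u v T (Fin.cons t y) =
      t ^ (u 0 - 1) * dirichletWeight (Fin.tail u) v (T - t) y := by
  simp only [dirichletWeight, Fin.sum_univ_succ, Fin.prod_univ_succ, Fin.cons_zero, Fin.cons_succ,
    Fin.tail, sub_sub]
  ring

lemma sum_add_pos {u : Fin d → ℝ} (hu : ∀ i, 0 < u i) (hv : 0 < v) : 0 < ∑ i, u i + v :=
  add_pos_of_nonneg_of_pos (Finset.sum_nonneg fun i _ => (hu i).le) hv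

lemma multivariateBeta_pos {u : Fin d → ℝ} (hu : ∀ i, 0 < u i) (hv : 0 < v) :
    0 < multivariateBeta u v :=
  div_pos (mul_pos (Finset.prod_pos fun i _ => Gamma_pos_of_pos (hu i)) (Gamma_pos_of_pos hv))
    (Gamma_pos_of_pos (sum_add_pos hu hv))

lemma beta_mul_multivariateBeta_tail {u : Fin (d + 1) → ℝ} (hu : ∀ i, 0 < u i) (hv : 0 < v) :
    beta (u 0) (∑ i, Fin.tail u i + v) * multivariateBeta (Fin.tail u) v =
      multivariateBeta u v := by
  have hΓ : Gamma (∑ i, Fin.tail u i + v) ≠ 0 :=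
    (Gamma_pos_of_pos (sum_add_pos (fun i => hu i.succ) hv)).ne'
  rw [multivariateBeta, multivariateBeta, beta, Fin.sum_univ_succ, Fin.prod_univ_succ, add_assoc]
  simp only [Fin.tail] at hΓ ⊢
  field_simp

theorem lintegral_dirichletWeight {u : Fin d → ℝ} (hu : ∀ i, 0 < u i) (hv : 0 < v) (hT : 0 < T) :
    ∫⁻ x in scaledSimplex d T, ENNReal.ofReal (dirichletWeight u v T x) =
      ENNReal.ofReal (T ^ (∑ i, u i + v - 1) * multivariateBeta u v) := by
  induction d generalizing T with
  | zero =>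
    have hΓ : Gamma v ≠ 0 := (Gamma_pos_of_pos hv).ne'
    simp [scaledSimplex, dirichletWeight, multivariateBeta, hT.le, hΓ, lintegral_unique, volume_pi]
  | succ d ih =>
    set w := ∑ i, Fin.tail u i + v
    have htail : ∀ i, 0 < Fin.tail u i := fun i => hu i.succ
    have hB := multivariateBeta_pos htail hv
    have hslice : ∀ t ∈ Set.Ioo 0 T,
        ∫⁻ y in scaledSimplex d (T - t), ENNReal.ofReal (dirichletWeight u v T (Fin.cons t y)) =
          ENNReal.ofReal (t ^ (u 0 - 1) * (T - t) ^ (w - 1)) *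
            ENNReal.ofReal (multivariateBeta (Fin.tail u) v) := fun t ht => by
      have ht0 := rpow_nonneg ht.1.le (u 0 - 1)
      simp only [dirichletWeight_cons, ENNReal.ofReal_mul ht0]
      rw [lintegral_const_mul' _ _ ENNReal.ofReal_ne_top, ih htail (sub_pos.2 ht.2),
        ENNReal.ofReal_mul' hB.le, mul_assoc]
    rw [lintegral_scaledSimplex_succ (measurable_dirichletWeight u v T).ennreal_ofReal,
      setLIntegral_congr_fun measurableSet_Ioo hslice,
      lintegral_mul_const' _ _ ENNReal.ofReal_ne_top,
      lintegral_rpow_mul_sub_rpow (hu 0) (sum_add_pos htail hv) hT, ← ENNReal.ofReal_mul' hB.le,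
      mul_assoc, beta_mul_multivariateBeta_tail hu hv, Fin.sum_univ_succ, add_assoc (u 0)]
    rfl

end DirichletIntegral

section DirichletMoments

variable {d : ℕ} {u : Fin d → ℝ} {v : ℝ}

lemma Kdir_eq_dirichletWeight_div (u : Fin d → ℝ) (v : ℝ) (x : Fin d → ℝ) :
    Kdir u v x = dirichletWeight u v 1 x / multivariateBeta u v := by
  rw [Kdir, dirichletWeight, multivariateBeta, mul_comm (Gamma v), mul_assoc, mul_comm,
    div_eq_mul_inv _ (_ / _), inv_div]

lemma measurable_Kdir (u : Fin d → ℝ) (v : ℝ) : Measurable (Kdir u v) := by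
  unfold Kdir
  fun_prop

lemma Kdir_nonneg (hu : ∀ i, 0 < u i) (hv : 0 < v) {x : Fin d → ℝ} (hx : x ∈ Sd d) :
    0 ≤ Kdir u v x := by
  rw [Kdir_eq_dirichletWeight_div]
  exact div_nonneg (mul_nonneg (rpow_nonneg (sub_nonneg.2 hx.2) _)
    (Finset.prod_nonneg fun i _ => rpow_nonneg (hx.1 i).1 _)) (multivariateBeta_pos hu hv).le

lemma lintegral_Kdir (hu : ∀ i, 0 < u i) (hv : 0 < v) :
    ∫⁻ x in Sd d, ENNReal.ofReal (Kdir u v x) = 1 := by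
  have hB := multivariateBeta_pos hu hv
  simp only [Kdir_eq_dirichletWeight_div, div_eq_mul_inv,
    ENNReal.ofReal_mul' (inv_nonneg.2 hB.le)]
  rw [lintegral_mul_const' _ _ ENNReal.ofReal_ne_top, Sd_eq_scaledSimplex,
    lintegral_dirichletWeight hu hv one_pos, one_rpow, one_mul,
    ← ENNReal.ofReal_mul hB.le, mul_inv_cancel₀ hB.ne', ENNReal.ofReal_one]

lemma ae_Kdir_nonneg (hu : ∀ i, 0 < u i) (hv : 0 < v) :
    0 ≤ᵐ[volume.restrict (Sd d)] Kdir u v :=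
  ae_restrict_of_forall_mem (measurableSet_Sd d) fun _ => Kdir_nonneg hu hv

lemma integral_Kdir (hu : ∀ i, 0 < u i) (hv : 0 < v) : ∫ x in Sd d, Kdir u v x = 1 := by
  rw [integral_eq_lintegral_of_nonneg_ae (ae_Kdir_nonneg hu hv)
    (measurable_Kdir u v).aestronglyMeasurable, lintegral_Kdir hu hv, ENNReal.toReal_one]

lemma integrableOn_Kdir (hu : ∀ i, 0 < u i) (hv : 0 < v) : IntegrableOn (Kdir u v) (Sd d) :=
  integrable_of_integral_eq_one (integral_Kdir hu hv)

lemma integrableOn_mul_Kdir (hu : ∀ i, 0 < u i) (hv : 0 < v) {g : (Fin d → ℝ) → ℝ}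
    (hg : Continuous g) : IntegrableOn (fun x => g x * Kdir u v x) (Sd d) :=
  (integrableOn_Kdir hu hv).continuousOn_mul hg.continuousOn (isCompact_Sd d)

lemma integral_mul_Kdir_mono (hu : ∀ i, 0 < u i) (hv : 0 < v) {f g : (Fin d → ℝ) → ℝ}
    (hf : Continuous f) (hg : Continuous g) (hfg : ∀ x ∈ Sd d, f x ≤ g x) :
    ∫ x in Sd d, f x * Kdir u v x ≤ ∫ x in Sd d, g x * Kdir u v x :=
  setIntegral_mono_on (integrableOn_mul_Kdir hu hv hf) (integrableOn_mul_Kdir hu hv hg)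
    (measurableSet_Sd d) fun x hx => mul_le_mul_of_nonneg_right (hfg x hx) (Kdir_nonneg hu hv hx)

lemma prod_add_single {ι R M : Type*} [Fintype ι] [DecidableEq ι] [AddZeroClass R]
    [CommMonoid M] (g : ι → R → M) (a : ι → R) (r : R) {j : ι} {c : M}
    (h : g j (a j + r) = c * g j (a j)) :
    ∏ i, g i ((a + Pi.single j r : ι → R) i) = c * ∏ i, g i (a i) := by
  have hoff : ∀ i ∈ Finset.univ.erase j,
      g i ((a + Pi.single j r : ι → R) i) = g i (a i) := fun i hi => by
    rw [Pi.add_apply, Pi.single_eq_of_ne (Finset.ne_of_mem_erase hi), add_zero]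
  rw [← Finset.mul_prod_erase _ _ (Finset.mem_univ j), Finset.prod_congr rfl hoff, Pi.add_apply,
    Pi.single_eq_same, h, mul_assoc, Finset.mul_prod_erase _ (fun i => g i (a i))
      (Finset.mem_univ j)]

lemma sum_add_single (u : Fin d → ℝ) (v : ℝ) (j : Fin d) :
    ∑ i, (u + Pi.single j 1 : Fin d → ℝ) i + v = ∑ i, u i + v + 1 := by
  simp only [Pi.add_apply, Finset.sum_add_distrib, Finset.sum_pi_single', Finset.mem_univ, if_true]
  ring

lemma add_single_pos (hu : ∀ i, 0 < u i) (j i : Fin d) : 0 < (u + Pi.single j 1 : Fin d → ℝ) i :=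
  add_pos_of_pos_of_nonneg (hu i) (Pi.single_nonneg (α := fun _ => ℝ).2 zero_le_one i)

lemma multivariateBeta_add_single (hu : ∀ i, 0 < u i) (hv : 0 < v) (j : Fin d) :
    (∑ i, u i + v) * multivariateBeta (u + Pi.single j 1) v = u j * multivariateBeta u v := by
  have hN := sum_add_pos hu hv
  have hΓ := (Gamma_pos_of_pos hN).ne'
  rw [multivariateBeta, multivariateBeta, sum_add_single, Gamma_add_one hN.ne',
    prod_add_single (fun _ => Gamma) u 1 (Gamma_add_one (hu j).ne')]
  field_simp

lemma dirichletWeight_add_single {j : Fin d} (hu : u j ≠ 0) {T : ℝ} {x : Fin d → ℝ}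
    (hx : 0 ≤ x j) :
    dirichletWeight (u + Pi.single j 1) v T x = x j * dirichletWeight u v T x := by
  have hrpow : x j ^ (u j + 1 - 1) = x j * x j ^ (u j - 1) := by
    rw [← rpow_one_add' hx (by simpa), add_sub_cancel_right, add_sub_cancel]
  rw [dirichletWeight, dirichletWeight,
    prod_add_single (fun i r => x i ^ (r - 1)) u 1 hrpow, mul_left_comm]

lemma sum_mul_coord_mul_Kdir (hu : ∀ i, 0 < u i) (hv : 0 < v) (j : Fin d) {x : Fin d → ℝ}
    (hx : x ∈ Sd d) :
    (∑ i, u i + v) * (x j * Kdir u v x) = u j * Kdir (u + Pi.single j 1) v x := by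
  have hB := (multivariateBeta_pos hu hv).ne'
  have hB' := (multivariateBeta_pos (add_single_pos hu j) hv).ne'
  rw [Kdir_eq_dirichletWeight_div, Kdir_eq_dirichletWeight_div,
    dirichletWeight_add_single (hu j).ne' (hx.1 j).1]
  field_simp
  linear_combination (x j * dirichletWeight u v 1 x) * multivariateBeta_add_single hu hv j

lemma sum_mul_integral_pow_succ_mul_Kdir (hu : ∀ i, 0 < u i) (hv : 0 < v) (j : Fin d) (k : ℕ) :
    (∑ i, u i + v) * ∫ x in Sd d, x j ^ (k + 1) * Kdir u v x =
      u j * ∫ x in Sd d, x j ^ k * Kdir (u + Pi.single j 1) v x := by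
  rw [← integral_const_mul, ← integral_const_mul]
  refine setIntegral_congr_fun (measurableSet_Sd d) fun x hx => ?_
  linear_combination x j ^ k * sum_mul_coord_mul_Kdir hu hv j hx

lemma integral_pow_succ_mul_Kdir (hu : ∀ i, 0 < u i) (hv : 0 < v) (j : Fin d) (k : ℕ) :
    (∑ i, u i + v + k) * ∫ x in Sd d, x j ^ (k + 1) * Kdir u v x =
      (u j + k) * ∫ x in Sd d, x j ^ k * Kdir u v x := by
  induction k generalizing u with
  | zero =>
    have hmean := sum_mul_integral_pow_succ_mul_Kdir hu hv j 0
    simp only [pow_zero, one_mul, integral_Kdir hu hv, integral_Kdir (add_single_pos hu j) hv,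
      Nat.cast_zero, add_zero, mul_one] at hmean ⊢
    exact hmean
  | succ k ih =>
    have hN := (sum_add_pos hu hv).ne'
    have hbias := sum_mul_integral_pow_succ_mul_Kdir hu hv j k
    have hbias' := sum_mul_integral_pow_succ_mul_Kdir hu hv j (k + 1)
    have hrec := ih (add_single_pos hu j)
    rw [sum_add_single, Pi.add_apply, Pi.single_eq_same] at hrec
    apply mul_left_cancel₀ hN
    push_cast
    linear_combination (∑ i, u i + v + (k + 1)) * hbias' + u j * hrec - (u j + (k + 1)) * hbias

lemma integral_stein_pow_mul_Kdir (hu : ∀ i, 0 < u i) (hv : 0 < v) (j : Fin d) (k : ℕ) :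
    ∫ x in Sd d, ((∑ i, u i + v) * x j - u j) * x j ^ k * Kdir u v x =
      k * ∫ x in Sd d, (1 - x j) * x j ^ k * Kdir u v x := by
  set N := ∑ i, u i + v
  have hint (n : ℕ) : IntegrableOn (fun x => x j ^ n * Kdir u v x) (Sd d) :=
    integrableOn_mul_Kdir hu hv (by fun_prop)
  have hleft (x : Fin d → ℝ) : (N * x j - u j) * x j ^ k * Kdir u v x =
      N * (x j ^ (k + 1) * Kdir u v x) - u j * (x j ^ k * Kdir u v x) := by ring
  have hright (x : Fin d → ℝ) : (1 - x j) * x j ^ k * Kdir u v x =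
      x j ^ k * Kdir u v x - x j ^ (k + 1) * Kdir u v x := by ring
  simp only [hleft, hright]
  rw [integral_sub ((hint (k + 1)).const_mul N) ((hint k).const_mul (u j)), integral_const_mul,
    integral_const_mul, integral_sub (hint k) (hint (k + 1))]
  linear_combination integral_pow_succ_mul_Kdir hu hv j k

theorem integral_stein_mul_Kdir (hu : ∀ i, 0 < u i) (hv : 0 < v) (j : Fin d)
    (p : Polynomial ℝ) :
    ∫ x in Sd d, ((∑ i, u i + v) * x j - u j) * p.eval (x j) * Kdir u v x =
      ∫ x in Sd d, x j * (1 - x j) * p.derivative.eval (x j) * Kdir u v x := by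
  have hint {g : (Fin d → ℝ) → ℝ} (hg : Continuous g) := integrableOn_mul_Kdir hu hv hg
  set N := ∑ i, u i + v
  induction p using Polynomial.induction_on' with
  | add p q hp hq =>
    simp only [Polynomial.eval_add, Polynomial.derivative_add, mul_add, add_mul]
    rw [integral_add (hint (by fun_prop)) (hint (by fun_prop)),
      integral_add (hint (by fun_prop)) (hint (by fun_prop)), hp, hq]
  | monomial k a =>
    have hpow (t : ℝ) : t * (k * t ^ (k - 1)) = k * t ^ k := by
      cases k with
      | zero => simp
      | succ k => rw [Nat.add_sub_cancel]; ring
    have hleft (x : Fin d → ℝ) : (N * x j - u j) * (a * x j ^ k) * Kdir u v x =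
        a * ((N * x j - u j) * x j ^ k * Kdir u v x) := by ring
    have hright (x : Fin d → ℝ) : x j * (1 - x j) * (a * k * x j ^ (k - 1)) * Kdir u v x =
        a * (k * ((1 - x j) * x j ^ k * Kdir u v x)) := by
      linear_combination a * (1 - x j) * Kdir u v x * hpow (x j)
    simp only [Polynomial.derivative_monomial, Polynomial.eval_monomial, hleft, hright,
      integral_const_mul]
    rw [integral_stein_pow_mul_Kdir hu hv j k]

lemma sum_mul_integral_sub_pow_add_two (hu : ∀ i, 0 < u i) (hv : 0 < v) (j : Fin d) (a : ℝ)
    (n : ℕ) :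
    (∑ i, u i + v) * ∫ x in Sd d, (x j - a) ^ (n + 2) * Kdir u v x =
      ∫ x in Sd d, ((n + 1) * (x j * (1 - x j)) + (u j - (∑ i, u i + v) * a) * (x j - a)) *
        (x j - a) ^ n * Kdir u v x := by
  have hstein := integral_stein_mul_Kdir hu hv j ((Polynomial.X - Polynomial.C a) ^ (n + 1))
  have hint {g : (Fin d → ℝ) → ℝ} (hg : Continuous g) := integrableOn_mul_Kdir hu hv hg
  set N := ∑ i, u i + v
  simp only [Polynomial.derivative_X_sub_C_pow, Nat.add_sub_cancel, Polynomial.eval_pow,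
    Polynomial.eval_sub, Polynomial.eval_X, Polynomial.eval_C, Polynomial.eval_mul] at hstein
  have hleft (x : Fin d → ℝ) : N * ((x j - a) ^ (n + 2) * Kdir u v x) =
      (N * x j - u j) * (x j - a) ^ (n + 1) * Kdir u v x +
        (u j - N * a) * (x j - a) ^ (n + 1) * Kdir u v x := by ring
  rw [← integral_const_mul]
  simp only [hleft]
  rw [integral_add (hint (by fun_prop)) (hint (by fun_prop)), hstein,
    ← integral_add (hint (by fun_prop)) (hint (by fun_prop))]
  congr with x
  push_cast
  ring

lemma sum_mul_integral_sub_pow_succ_le (hu : ∀ i, 0 < u i) (hv : 0 < v) (j : Fin d) {a c : ℝ}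
    (ha : a ∈ Set.Icc 0 1) (hc : |u j - (∑ i, u i + v) * a| ≤ c) (m : ℕ) :
    (∑ i, u i + v) * ∫ x in Sd d, (x j - a) ^ (2 * (m + 1)) * Kdir u v x ≤
      ((2 * m + 1) / 4 + c) * ∫ x in Sd d, (x j - a) ^ (2 * m) * Kdir u v x := by
  rw [mul_add_one, sum_mul_integral_sub_pow_add_two hu hv, ← integral_const_mul]
  set N := ∑ i, u i + v
  simp only [← mul_assoc _ (_ ^ _)]
  refine integral_mul_Kdir_mono hu hv (by fun_prop) (by fun_prop) fun x hx =>
    mul_le_mul_of_nonneg_right ?_ ((even_two_mul m).pow_nonneg _)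
  have hvar : x j * (1 - x j) ≤ 1 / 4 := by linarith [sq_nonneg (x j - 1 / 2)]
  have hdist : |x j - a| ≤ 1 := by
    rw [abs_le]
    constructor <;> linarith [(hx.1 j).1, (hx.1 j).2, ha.1, ha.2]
  have hdrift : (u j - N * a) * (x j - a) ≤ c := by
    refine (le_abs_self _).trans ?_
    rw [abs_mul]
    exact (mul_le_of_le_one_right (abs_nonneg _) hdist).trans hc
  have := mul_le_mul_of_nonneg_left hvar (by positivity : (0 : ℝ) ≤ 2 * m + 1)
  push_cast
  linarith

theorem sum_pow_mul_integral_sub_pow_le (hu : ∀ i, 0 < u i) (hv : 0 < v) (j : Fin d) {a c : ℝ}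
    (ha : a ∈ Set.Icc 0 1) (hc : |u j - (∑ i, u i + v) * a| ≤ c) (m : ℕ) :
    (∑ i, u i + v) ^ m * ∫ x in Sd d, (x j - a) ^ (2 * m) * Kdir u v x ≤
      ∏ i ∈ Finset.range m, ((2 * i + 1) / 4 + c) := by
  induction m with
  | zero => simp [integral_Kdir hu hv]
  | succ m ih =>
    have hN := sum_add_pos hu hv
    have hc0 : 0 ≤ c := (abs_nonneg _).trans hc
    rw [Finset.prod_range_succ, pow_succ, mul_assoc]
    calc (∑ i, u i + v) ^ m *
          ((∑ i, u i + v) * ∫ x in Sd d, (x j - a) ^ (2 * (m + 1)) * Kdir u v x)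
      _ ≤ (∑ i, u i + v) ^ m *
          (((2 * m + 1) / 4 + c) * ∫ x in Sd d, (x j - a) ^ (2 * m) * Kdir u v x) := by
        exact mul_le_mul_of_nonneg_left (sum_mul_integral_sub_pow_succ_le hu hv j ha hc m)
          (by positivity)
      _ ≤ _ := by
        rw [mul_left_comm, mul_comm (∏ _ ∈ _, _)]
        gcongr

theorem sum_pow_mul_integral_pow_le (hu : ∀ i, 0 < u i) (hv : 0 < v) (j : Fin d) (k : ℕ) :
    (∑ i, u i + v) ^ k * ∫ x in Sd d, x j ^ k * Kdir u v x ≤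
      ∏ i ∈ Finset.range k, (u j + i) := by
  induction k with
  | zero => simp [integral_Kdir hu hv]
  | succ k ih =>
    have hN := sum_add_pos hu hv
    have huj := hu j
    have hmoment : 0 ≤ ∫ x in Sd d, x j ^ (k + 1) * Kdir u v x :=
      setIntegral_nonneg (measurableSet_Sd d) fun x hx =>
        mul_nonneg (pow_nonneg (hx.1 j).1 _) (Kdir_nonneg hu hv hx)
    rw [Finset.prod_range_succ, pow_succ, mul_assoc]
    calc (∑ i, u i + v) ^ k * ((∑ i, u i + v) * ∫ x in Sd d, x j ^ (k + 1) * Kdir u v x)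
      _ ≤ (∑ i, u i + v) ^ k *
          ((∑ i, u i + v + k) * ∫ x in Sd d, x j ^ (k + 1) * Kdir u v x) := by
        exact mul_le_mul_of_nonneg_left
          (mul_le_mul_of_nonneg_right (le_add_of_nonneg_right k.cast_nonneg) hmoment)
          (by positivity)
      _ = (u j + k) * ((∑ i, u i + v) ^ k * ∫ x in Sd d, x j ^ k * Kdir u v x) := by
        rw [integral_pow_succ_mul_Kdir hu hv, mul_left_comm]
      _ ≤ _ := by
        rw [mul_comm (∏ _ ∈ _, _)]
        gcongr

end DirichletMoments

section Kappa

variable {d : ℕ} {s : Fin d → ℝ} {b : ℝ}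

lemma mem_Icc_of_mem_SdInt (hs : s ∈ SdInt d) (j : Fin d) : s j ∈ Set.Icc 0 1 :=
  ⟨(hs.1 j).le, (Finset.single_le_sum (fun i _ => (hs.1 i).le) (Finset.mem_univ j)).trans hs.2.le⟩

lemma kappa_param_pos (hs : s ∈ SdInt d) (hb : 0 < b) (i : Fin d) : 0 < s i / b + 1 :=
  add_pos (div_pos (hs.1 i) hb) one_pos

lemma kappa_last_param_pos (hs : s ∈ SdInt d) (hb : 0 < b) : 0 < (1 - ∑ i, s i) / b + 1 :=
  add_pos (div_pos (sub_pos.2 hs.2) hb) one_pos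

lemma sum_kappa_param (s : Fin d → ℝ) (b : ℝ) :
    ∑ i, (s i / b + 1) + ((1 - ∑ i, s i) / b + 1) = b⁻¹ + (d + 1) := by
  rw [Finset.sum_add_distrib, ← Finset.sum_div, Finset.sum_const, Finset.card_univ,
    Fintype.card_fin, nsmul_one]
  ring

lemma inv_le_sum_kappa_param (s : Fin d → ℝ) (b : ℝ) :
    b⁻¹ ≤ ∑ i, (s i / b + 1) + ((1 - ∑ i, s i) / b + 1) := by
  rw [sum_kappa_param]
  exact le_add_of_nonneg_right (by positivity)

lemma abs_kappa_param_sub_sum_mul_le (hs : s ∈ SdInt d) (b : ℝ) (j : Fin d) :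
    |s j / b + 1 - (∑ i, (s i / b + 1) + ((1 - ∑ i, s i) / b + 1)) * s j| ≤ d := by
  have hd : (1 : ℝ) ≤ d := Nat.one_le_cast.2 j.pos
  have hj := mem_Icc_of_mem_SdInt hs j
  have hdrift : s j / b + 1 - (b⁻¹ + (d + 1)) * s j = 1 - (d + 1) * s j := by ring
  rw [sum_kappa_param, hdrift, abs_le]
  constructor <;> nlinarith [hj.1, hj.2]

lemma le_mul_pow_of_pow_mul_le {N x C : ℝ} {m : ℕ} (hb : 0 < b) (hN : b⁻¹ ≤ N) (hx : 0 ≤ x)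
    (h : N ^ m * x ≤ C) : x ≤ C * b ^ m := by
  rw [← div_le_iff₀ (pow_pos hb m), div_eq_inv_mul, ← inv_pow]
  exact (mul_le_mul_of_nonneg_right (pow_le_pow_left₀ (inv_pos.2 hb).le hN m) hx).trans h

theorem integral_abs_sub_pow_mul_kappa_le (hs : s ∈ SdInt d) (hb : 0 < b) (j : Fin d) (m : ℕ) :
    ∫ x in Sd d, |x j - s j| ^ (2 * m) * kappa s b x ≤
      (∏ i ∈ Finset.range m, ((2 * i + 1) / 4 + d : ℝ)) * b ^ m := by
  have hu := kappa_param_pos hs hb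
  have hv := kappa_last_param_pos hs hb
  simp only [(even_two_mul m).pow_abs, kappa]
  exact le_mul_pow_of_pow_mul_le hb (inv_le_sum_kappa_param s b)
    (setIntegral_nonneg (measurableSet_Sd d) fun x hx =>
      mul_nonneg ((even_two_mul m).pow_nonneg _) (Kdir_nonneg hu hv hx))
    (sum_pow_mul_integral_sub_pow_le hu hv j (mem_Icc_of_mem_SdInt hs j)
      (abs_kappa_param_sub_sum_mul_le hs b j) m)

lemma integral_pow_mul_kappa_le (hs : s ∈ SdInt d) (hb : 0 < b) {j : Fin d} {L : ℝ}
    (hL : s j / b ≤ L) (k : ℕ) :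
    ∫ x in Sd d, x j ^ k * kappa s b x ≤ (∏ i ∈ Finset.range k, (L + 1 + i)) * b ^ k := by
  have hu := kappa_param_pos hs hb
  have hv := kappa_last_param_pos hs hb
  refine le_mul_pow_of_pow_mul_le hb (inv_le_sum_kappa_param s b)
    (setIntegral_nonneg (measurableSet_Sd d) fun x hx =>
      mul_nonneg (pow_nonneg (hx.1 j).1 k) (Kdir_nonneg hu hv hx))
    ((sum_pow_mul_integral_pow_le hu hv j k).trans ?_)
  have := hu j
  gcongr

lemma abs_sub_pow_le_pow_add_pow {x y : ℝ} (hx : 0 ≤ x) (hy : 0 ≤ y) (k : ℕ) :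
    |x - y| ^ k ≤ x ^ k + y ^ k := by
  rcases le_total x y with hxy | hyx
  · exact (pow_le_pow_left₀ (abs_nonneg _) (abs_sub_le_of_nonneg_of_le hx hxy hy le_rfl) k).trans
      (le_add_of_nonneg_left (pow_nonneg hx k))
  · exact (pow_le_pow_left₀ (abs_nonneg _) (abs_sub_le_of_nonneg_of_le hx le_rfl hy hyx) k).trans
      (le_add_of_nonneg_right (pow_nonneg hy k))

theorem integral_abs_sub_pow_mul_kappa_le_of_div_le (hs : s ∈ SdInt d) (hb : 0 < b) {j : Fin d}
    {L : ℝ} (hL : s j / b ≤ L) (k : ℕ) :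
    ∫ x in Sd d, |x j - s j| ^ k * kappa s b x ≤
      (∏ i ∈ Finset.range k, (L + 1 + i) + L ^ k) * b ^ k := by
  have hu := kappa_param_pos hs hb
  have hv := kappa_last_param_pos hs hb
  calc ∫ x in Sd d, |x j - s j| ^ k * kappa s b x
    _ ≤ ∫ x in Sd d, (x j ^ k + s j ^ k) * kappa s b x :=
      integral_mul_Kdir_mono hu hv (by fun_prop) (by fun_prop) fun x hx =>
        abs_sub_pow_le_pow_add_pow (hx.1 j).1 (hs.1 j).le k
    _ = (∫ x in Sd d, x j ^ k * kappa s b x) + s j ^ k := by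
      simp only [add_mul, kappa]
      rw [integral_add (integrableOn_mul_Kdir hu hv (by fun_prop))
        ((integrableOn_Kdir hu hv).const_mul _), integral_const_mul, integral_Kdir hu hv, mul_one]
    _ ≤ (∏ i ∈ Finset.range k, (L + 1 + i)) * b ^ k + (L * b) ^ k :=
      add_le_add (integral_pow_mul_kappa_le hs hb hL k)
        (pow_le_pow_left₀ (hs.1 j).le ((div_le_iff₀ hb).1 hL) k)
    _ = _ := by rw [mul_pow, add_mul]

end Kappa

theorem dirichlet_sixth_moment_bounds_general {d : ℕ} (j : Fin d) :
    (∃ C > (0 : ℝ), ∀ s ∈ SdInt d, ∀ b > (0 : ℝ),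
      ∫ x in Sd d, |x j - s j| ^ 6 * kappa s b x ≤ C * b ^ 3) ∧
    (∀ s : ℝ → Fin d → ℝ, (∀ b : ℝ, 0 < b → s b ∈ SdInt d) →
      IsBoundedUnder (· ≤ ·) (nhdsWithin 0 (Set.Ioi 0)) (fun b : ℝ => s b j / b) →
      ∃ C > (0 : ℝ), ∃ b₀ > (0 : ℝ), ∀ b ∈ Set.Ioo (0 : ℝ) b₀,
        ∫ x in Sd d, |x j - s b j| ^ 6 * kappa (s b) b x ≤ C * b ^ 6) := by
  refine ⟨⟨∏ i ∈ Finset.range 3, ((2 * i + 1) / 4 + d : ℝ), by positivity,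
    fun s hs b hb => integral_abs_sub_pow_mul_kappa_le hs hb j 3⟩, fun s hs ⟨L, hL⟩ => ?_⟩
  obtain ⟨b₀, hb₀, hlt⟩ := mem_nhdsGT_iff_exists_Ioo_subset.1 (eventually_map.1 hL)
  have hbound : ∀ b ∈ Set.Ioo 0 b₀, s b j / b ≤ max L 0 := fun b hb =>
    (hlt hb).trans (le_max_left L 0)
  exact ⟨∏ i ∈ Finset.range 6, (max L 0 + 1 + i : ℝ) + max L 0 ^ 6, by positivity, b₀, hb₀,
    fun b hb => integral_abs_sub_pow_mul_kappa_le_of_div_le (hs b hb.1) hb.1 (hbound b hb) 6⟩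

/-- sixth absolute central moments of the Dirichlet kernel. -/
theorem dirichlet_sixth_moment_bounds (d : ℕ) (hd : 0 < d) (j : Fin d) :
    (∀ s ∈ SdInt d, ∃ C > (0 : ℝ), ∃ b₀ > (0 : ℝ), ∀ b ∈ Set.Ioo (0 : ℝ) b₀,
      (∫ x in Sd d, |x j - s j| ^ 6 * kappa s b x) ≤ C * b ^ 3) ∧
    (∀ lamj : ℝ, 0 < lamj → ∀ s : ℝ → Fin d → ℝ, (∀ b : ℝ, 0 < b → s b ∈ SdInt d) →
      Tendsto (fun b : ℝ => s b j / b) (nhdsWithin 0 (Set.Ioi 0)) (nhds lamj) →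
      ∃ C > (0 : ℝ), ∃ b₀ > (0 : ℝ), ∀ b ∈ Set.Ioo (0 : ℝ) b₀,
        (∫ x in Sd d, |x j - s b j| ^ 6 * kappa (s b) b x) ≤ C * b ^ 6) := by
  obtain ⟨⟨C, hC, h⟩, h'⟩ := dirichlet_sixth_moment_bounds_general j
  exact ⟨fun s hs => ⟨C, hC, 1, one_pos, fun b hb => h s hs b hb.1⟩,
    fun _ _ s hs hlim => h' s hs hlim.isBoundedUnder_le⟩
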